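/- arXiv:1203.5438 — 3 statements merged into one kernel-verified Lean document; each statement's English description precedes it below -/
import Mathlib

section
/- Let n, d, q be positive integers and let κ, ν, λ be positive real numbers, and let A ∈ ℝ^{n×n}. Then the function Ψ(S,W) = (κ/2)‖W‖_F² + (ν/2)‖S−A‖_F² + λ·Q(W, Λ(S), W) is convex on the set E = { (S,W) : S ∈ ℝ^{n×n} is symmetric with all entries nonnegative, and ‖W‖_F ≤ √(νκ) / (2λ(√n + 1)) }. -/
open scoped BigOperators
open Matrix

/-- Squared Frobenius norm of a matrix. -/
noncomputable def frobSq {n m : ℕ} (M : Matrix (Fin n) (Fin m) ℝ) : ℝ :=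
  ∑ i, ∑ j, (M i j) ^ 2

/-- Frobenius norm of a matrix. -/
noncomputable def frob {n m : ℕ} (M : Matrix (Fin n) (Fin m) ℝ) : ℝ :=
  Real.sqrt (frobSq M)

/-- Squared Frobenius norm of a collection of `n` matrices. -/
noncomputable def collFrobSq {n d q : ℕ} (W : Fin n → Matrix (Fin d) (Fin q) ℝ) : ℝ :=
  ∑ i, frobSq (W i)

/-- Frobenius norm of a collection of `n` matrices. -/
noncomputable def collFrob {n d q : ℕ} (W : Fin n → Matrix (Fin d) (Fin q) ℝ) : ℝ :=
  Real.sqrt (collFrobSq W)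

/-- Diagonal degree matrix of a square matrix. -/
noncomputable def degMatrix {n : ℕ} (Z : Matrix (Fin n) (Fin n) ℝ) : Matrix (Fin n) (Fin n) ℝ :=
  Matrix.diagonal (fun i => ∑ j, Z i j)

/-- Graph Laplacian of a square matrix. -/
noncomputable def lap {n : ℕ} (Z : Matrix (Fin n) (Fin n) ℝ) : Matrix (Fin n) (Fin n) ℝ :=
  degMatrix Z - Z

/-- The bilinear form `Q(W, M, V) = ∑ i j, M i j * Tr((W i)ᵀ (V j))`. -/
noncomputable def QForm {n d q : ℕ} (W : Fin n → Matrix (Fin d) (Fin q) ℝ)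
    (M : Matrix (Fin n) (Fin n) ℝ) (V : Fin n → Matrix (Fin d) (Fin q) ℝ) : ℝ :=
  ∑ i, ∑ j, M i j * ((W i)ᵀ * V j).trace


/-- Frobenius inner product. -/
noncomputable def ipF {d q : ℕ} (x y : Matrix (Fin d) (Fin q) ℝ) : ℝ := (xᵀ * y).trace

lemma ipF_eq {d q : ℕ} (x y : Matrix (Fin d) (Fin q) ℝ) :
    ipF x y = ∑ i, ∑ j, x i j * y i j := by
  unfold ipF
  simp only [Matrix.trace, Matrix.diag, Matrix.mul_apply, Matrix.transpose_apply]
  exact Finset.sum_comm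

lemma ipF_add_left {d q : ℕ} (x y z : Matrix (Fin d) (Fin q) ℝ) :
    ipF (x + y) z = ipF x z + ipF y z := by
  simp [ipF, Matrix.add_mul]

lemma ipF_sub_left {d q : ℕ} (x y z : Matrix (Fin d) (Fin q) ℝ) :
    ipF (x - y) z = ipF x z - ipF y z := by
  simp [ipF, Matrix.sub_mul]

lemma ipF_smul_left {d q : ℕ} (a : ℝ) (x z : Matrix (Fin d) (Fin q) ℝ) :
    ipF (a • x) z = a * ipF x z := by
  simp [ipF]

lemma ipF_comm {d q : ℕ} (x y : Matrix (Fin d) (Fin q) ℝ) : ipF x y = ipF y x := by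
  simp only [ipF_eq, mul_comm]

lemma ipF_add_right {d q : ℕ} (x y z : Matrix (Fin d) (Fin q) ℝ) :
    ipF z (x + y) = ipF z x + ipF z y := by
  simp [ipF, Matrix.mul_add]

lemma ipF_sub_right {d q : ℕ} (x y z : Matrix (Fin d) (Fin q) ℝ) :
    ipF z (x - y) = ipF z x - ipF z y := by
  simp [ipF, Matrix.mul_sub]

lemma ipF_smul_right {d q : ℕ} (a : ℝ) (x z : Matrix (Fin d) (Fin q) ℝ) :
    ipF z (a • x) = a * ipF z x := by
  simp [ipF]

lemma frobSq_eq_ipF {d q : ℕ} (x : Matrix (Fin d) (Fin q) ℝ) : frobSq x = ipF x x := by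
  simp only [ipF_eq, frobSq, sq]

lemma frobSq_nonneg' {d q : ℕ} (x : Matrix (Fin d) (Fin q) ℝ) : 0 ≤ frobSq x :=
  Finset.sum_nonneg fun _ _ => Finset.sum_nonneg fun _ _ => sq_nonneg _

lemma collFrobSq_nonneg' {n d q : ℕ} (x : Fin n → Matrix (Fin d) (Fin q) ℝ) :
    0 ≤ collFrobSq x :=
  Finset.sum_nonneg fun _ _ => frobSq_nonneg' _

lemma ipF_cs {d q : ℕ} (x y : Matrix (Fin d) (Fin q) ℝ) :
    (ipF x y) ^ 2 ≤ frobSq x * frobSq y := by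
  rw [ipF_eq, frobSq, frobSq]
  simp only [← Finset.sum_product']
  exact Finset.sum_mul_sq_le_sq_mul_sq _ _ _

lemma QForm_lap {n d q : ℕ} (W V : Fin n → Matrix (Fin d) (Fin q) ℝ)
    (Z : Matrix (Fin n) (Fin n) ℝ) :
    QForm W (lap Z) V = ∑ i, ∑ j, Z i j * ipF (W i) (V i) - ∑ i, ∑ j, Z i j * ipF (W i) (V j) := by
  unfold QForm lap degMatrix
  rw [← Finset.sum_sub_distrib]
  refine Finset.sum_congr rfl fun i _ => ?_
  simp only [Matrix.sub_apply, Matrix.diagonal_apply, sub_mul, Finset.sum_sub_distrib, ite_mul,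
    zero_mul, Finset.sum_ite_eq, Finset.mem_univ, if_true, ← Finset.sum_mul]
  rfl

lemma QForm_lap_symm {n d q : ℕ} (W V : Fin n → Matrix (Fin d) (Fin q) ℝ)
    (Z : Matrix (Fin n) (Fin n) ℝ) (hZ : Z.IsSymm) :
    QForm W (lap Z) V = 1 / 2 * ∑ i, ∑ j, Z i j * ipF (W i - W j) (V i - V j) := by
  rw [QForm_lap]
  have h1 : ∑ i, ∑ j, Z i j * ipF (W j) (V j) = ∑ i, ∑ j, Z i j * ipF (W i) (V i) := by
    rw [Finset.sum_comm]
    simp only [hZ.apply]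
  have h2 : ∑ i, ∑ j, Z i j * ipF (W j) (V i) = ∑ i, ∑ j, Z i j * ipF (W i) (V j) := by
    rw [Finset.sum_comm]
    simp only [hZ.apply]
  simp only [ipF_sub_left, ipF_sub_right, mul_sub, Finset.sum_sub_distrib, h1, h2]
  ring

lemma QForm_lap_bound {n d q : ℕ} (W V : Fin n → Matrix (Fin d) (Fin q) ℝ)
    (Z : Matrix (Fin n) (Fin n) ℝ) :
    |QForm W (lap Z) V| ≤ (Real.sqrt n + 1) * (frob Z * (collFrob W * collFrob V)) := by
  have hP : ∑ i, ∑ j, frobSq (W i) * frobSq (V j) = collFrobSq W * collFrobSq V := by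
    rw [collFrobSq, collFrobSq, Finset.sum_mul_sum]
  have key : ∀ (g : Fin n → Fin n → ℝ) (c : ℝ), 0 ≤ c →
      ∑ i, ∑ j, (g i j) ^ 2 ≤ c * (collFrobSq W * collFrobSq V) →
      |∑ i, ∑ j, Z i j * g i j| ≤ Real.sqrt c * (frob Z * (collFrob W * collFrob V)) := by
    intro g c hc h
    have h1 : (∑ i, ∑ j, Z i j * g i j) ^ 2 ≤ frobSq Z * ∑ i, ∑ j, (g i j) ^ 2 := by
      rw [frobSq]
      simp only [← Finset.sum_product']
      exact Finset.sum_mul_sq_le_sq_mul_sq _ _ _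
    refine abs_le_of_sq_le_sq ?_ ?_
    · unfold frob collFrob
      rw [mul_pow, mul_pow, mul_pow, Real.sq_sqrt hc, Real.sq_sqrt (frobSq_nonneg' _),
        Real.sq_sqrt (collFrobSq_nonneg' _), Real.sq_sqrt (collFrobSq_nonneg' _)]
      have := mul_le_mul_of_nonneg_left h (frobSq_nonneg' Z)
      linarith
    · unfold frob collFrob
      positivity
  rw [QForm_lap]
  have k1 := key (fun i _ => ipF (W i) (V i)) n (Nat.cast_nonneg n) (by
    simp only [Finset.sum_const, Finset.card_univ, Fintype.card_fin, nsmul_eq_mul,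
      ← Finset.mul_sum]
    refine mul_le_mul_of_nonneg_left ?_ (Nat.cast_nonneg n)
    rw [← hP]
    refine Finset.sum_le_sum fun i _ => (ipF_cs _ _).trans ?_
    exact Finset.single_le_sum (f := fun j => frobSq (W i) * frobSq (V j))
      (fun j _ => mul_nonneg (frobSq_nonneg' _) (frobSq_nonneg' _)) (Finset.mem_univ i))
  have k2 := key (fun i j => ipF (W i) (V j)) 1 zero_le_one (by
    rw [one_mul, ← hP]
    exact Finset.sum_le_sum fun i _ => Finset.sum_le_sum fun j _ => ipF_cs _ _)
  rw [Real.sqrt_one] at k2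
  calc _ ≤ _ := abs_sub _ _
    _ ≤ _ := add_le_add k1 k2
    _ = _ := by ring

lemma frobSq_comb {d q : ℕ} (a b : ℝ) (hab : a + b = 1) (x y : Matrix (Fin d) (Fin q) ℝ) :
    frobSq (a • x + b • y) = a * frobSq x + b * frobSq y - a * b * frobSq (y - x) := by
  obtain rfl : b = 1 - a := by linarith
  simp only [frobSq_eq_ipF, ipF_add_left, ipF_add_right, ipF_smul_left, ipF_smul_right,
    ipF_sub_left, ipF_sub_right]
  rw [ipF_comm y x]
  ring

lemma collFrobSq_comb {n d q : ℕ} (a b : ℝ) (hab : a + b = 1)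
    (x y : Fin n → Matrix (Fin d) (Fin q) ℝ) :
    collFrobSq (a • x + b • y)
      = a * collFrobSq x + b * collFrobSq y - a * b * collFrobSq (y - x) := by
  simp only [collFrobSq, Pi.add_apply, Pi.smul_apply, Pi.sub_apply, frobSq_comb a b hab,
    Finset.sum_sub_distrib, Finset.sum_add_distrib, Finset.mul_sum]

lemma collFrob_comb_le {n d q : ℕ} (a b : ℝ) (ha : 0 ≤ a) (hb : 0 ≤ b) (hab : a + b = 1)
    (x y : Fin n → Matrix (Fin d) (Fin q) ℝ) (R : ℝ) (hR : 0 ≤ R)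
    (hx : collFrob x ≤ R) (hy : collFrob y ≤ R) : collFrob (a • x + b • y) ≤ R := by
  unfold collFrob at *
  rw [Real.sqrt_le_left hR] at *
  rw [collFrobSq_comb a b hab]
  have := mul_nonneg (mul_nonneg ha hb) (collFrobSq_nonneg' (y - x))
  have h1 := mul_le_mul_of_nonneg_left hx ha
  have h2 := mul_le_mul_of_nonneg_left hy hb
  have : a * R ^ 2 + b * R ^ 2 = R ^ 2 := by rw [← add_mul, hab, one_mul]
  linarith

lemma QForm_comb {n d q : ℕ} (a b : ℝ) (hab : a + b = 1)
    (S T : Matrix (Fin n) (Fin n) ℝ) (hS : S.IsSymm) (hT : T.IsSymm)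
    (x y : Fin n → Matrix (Fin d) (Fin q) ℝ) :
    QForm (a • x + b • y) (lap (a • S + b • T)) (a • x + b • y)
      = a * QForm x (lap S) x + b * QForm y (lap T) y
        - a * b * (QForm (y - x) (lap (a • S + b • T)) (y - x)
          + QForm (y - x) (lap (T - S)) (y + x)) := by
  have hc : (a • S + b • T).IsSymm := (hS.smul a).add (hT.smul b)
  rw [QForm_lap_symm _ _ _ hc, QForm_lap_symm _ _ _ hc, QForm_lap_symm _ _ _ hS,
    QForm_lap_symm _ _ _ hT, QForm_lap_symm _ _ _ (hT.sub hS)]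
  simp only [Finset.mul_sum, ← Finset.sum_add_distrib, ← Finset.sum_sub_distrib]
  refine Finset.sum_congr rfl fun i _ => Finset.sum_congr rfl fun j _ => ?_
  obtain rfl : b = 1 - a := by linarith
  have e1 : (a • x + (1 - a) • y) i - (a • x + (1 - a) • y) j
      = a • (x i - x j) + (1 - a) • (y i - y j) := by
    simp only [Pi.add_apply, Pi.smul_apply, smul_sub]; abel
  have e2 : (y - x) i - (y - x) j = (y i - y j) - (x i - x j) := by
    simp only [Pi.sub_apply]; abel
  have e3 : (y + x) i - (y + x) j = (y i - y j) + (x i - x j) := by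
    simp only [Pi.add_apply]; abel
  rw [e1, e2, e3]
  generalize x i - x j = u
  generalize y i - y j = v
  simp only [ipF_add_left, ipF_add_right, ipF_smul_left, ipF_smul_right,
    ipF_sub_left, ipF_sub_right, Matrix.add_apply, Matrix.sub_apply, Matrix.smul_apply,
    smul_eq_mul]
  rw [ipF_comm v u]
  ring

lemma QForm_lap_nonneg {n d q : ℕ} (W : Fin n → Matrix (Fin d) (Fin q) ℝ)
    (Z : Matrix (Fin n) (Fin n) ℝ) (hZ : Z.IsSymm) (h0 : ∀ i j, 0 ≤ Z i j) :
    0 ≤ QForm W (lap Z) W := by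
  rw [QForm_lap_symm _ _ _ hZ]
  refine mul_nonneg (by norm_num) (Finset.sum_nonneg fun i _ => Finset.sum_nonneg fun j _ => ?_)
  rw [← frobSq_eq_ipF]
  exact mul_nonneg (h0 i j) (frobSq_nonneg' _)

/-- The function `Ψ(S,W) = (κ/2)‖W‖_F² + (ν/2)‖S−A‖_F² + λ Q(W, Λ(S), W)` is convex on the
set of pairs `(S,W)` with `S` symmetric entrywise nonnegative and
`‖W‖_F ≤ √(νκ)/(2λ(√n+1))`. -/
theorem stmt0 (n d q : ℕ) (hn : 0 < n) (hd : 0 < d) (hq : 0 < q)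
    (κ ν lam : ℝ) (hκ : 0 < κ) (hν : 0 < ν) (hlam : 0 < lam)
    (A : Matrix (Fin n) (Fin n) ℝ) :
    ConvexOn ℝ
      {p : Matrix (Fin n) (Fin n) ℝ × (Fin n → Matrix (Fin d) (Fin q) ℝ) |
        p.1.IsSymm ∧ (∀ i j, 0 ≤ p.1 i j) ∧
        collFrob p.2 ≤ Real.sqrt (ν * κ) / (2 * lam * (Real.sqrt n + 1))}
      (fun p => κ / 2 * collFrobSq p.2 + ν / 2 * frobSq (p.1 - A)
        + lam * QForm p.2 (lap p.1) p.2) := by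
  have hR0 : 0 ≤ Real.sqrt (ν * κ) / (2 * lam * (Real.sqrt n + 1)) := by positivity
  refine ⟨?_, ?_⟩
  · rintro ⟨S, x⟩ ⟨hS, hS0, hx⟩ ⟨T, y⟩ ⟨hT, hT0, hy⟩ a b ha hb hab
    refine ⟨(hS.smul a).add (hT.smul b), fun i j => ?_, ?_⟩
    · exact add_nonneg (mul_nonneg ha (hS0 i j)) (mul_nonneg hb (hT0 i j))
    · exact collFrob_comb_le a b ha hb hab x y _ hR0 hx hy
  · rintro ⟨S, x⟩ ⟨hS, hS0, hx⟩ ⟨T, y⟩ ⟨hT, hT0, hy⟩ a b ha hb hab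
    simp only [] at hS hS0 hx hT hT0 hy
    simp only [Prod.smul_mk, Prod.mk_add_mk, smul_eq_mul]
    have eA : a • S + b • T - A = a • (S - A) + b • (T - A) := by
      have : A = a • A + b • A := by rw [← add_smul, hab, one_smul]
      nth_rewrite 1 [this]
      rw [smul_sub, smul_sub]; abel
    have eB : T - A - (S - A) = T - S := by abel
    rw [eA, frobSq_comb a b hab, eB, collFrobSq_comb a b hab, QForm_comb a b hab S T hS hT]
    have hQ := QForm_lap_nonneg (y - x) (a • S + b • T) ((hS.smul a).add (hT.smul b))
      (fun i j => add_nonneg (mul_nonneg ha (hS0 i j)) (mul_nonneg hb (hT0 i j)))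
    have hB := QForm_lap_bound (y - x) (y + x) (T - S)
    have hU : collFrob (y + x) ≤ 2 * (Real.sqrt (ν * κ) / (2 * lam * (Real.sqrt n + 1))) := by
      have h := collFrob_comb_le (1/2) (1/2) (by norm_num) (by norm_num) (by norm_num) y x _ hR0 hy hx
      have e : collFrobSq ((1/2 : ℝ) • y + (1/2 : ℝ) • x) = (1/2) ^ 2 * collFrobSq (y + x) := by
        simp only [collFrobSq, frobSq, Finset.mul_sum, Pi.add_apply, Pi.smul_apply,
          Matrix.add_apply, Matrix.smul_apply, smul_eq_mul]
        refine Finset.sum_congr rfl fun i _ => Finset.sum_congr rfl fun j _ =>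
          Finset.sum_congr rfl fun k _ => by ring
      rw [collFrob, e, Real.sqrt_mul (by positivity), Real.sqrt_sq (by norm_num)] at h
      rw [collFrob]
      linarith
    set t := frob (T - S) with ht
    set v := collFrob (y - x) with hv
    have ht2 : frobSq (T - S) = t ^ 2 := (Real.sq_sqrt (frobSq_nonneg' _)).symm
    have hv2 : collFrobSq (y - x) = v ^ 2 := (Real.sq_sqrt (collFrobSq_nonneg' _)).symm
    have ht0 : 0 ≤ t := Real.sqrt_nonneg _
    have hv0 : 0 ≤ v := Real.sqrt_nonneg _
    have hC : lam * |QForm (y - x) (lap (T - S)) (y + x)| ≤ Real.sqrt (ν * κ) * (t * v) := by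
      calc _ ≤ lam * ((Real.sqrt n + 1) * (t * (v *
            (2 * (Real.sqrt (ν * κ) / (2 * lam * (Real.sqrt n + 1))))))) := by
            refine mul_le_mul_of_nonneg_left (hB.trans ?_) hlam.le
            gcongr
        _ = _ := by
            have : Real.sqrt n + 1 ≠ 0 := by positivity
            field_simp
    have hAM : Real.sqrt (ν * κ) * (t * v) ≤ κ / 2 * v ^ 2 + ν / 2 * t ^ 2 := by
      rw [Real.sqrt_mul hν.le]
      have h1 := Real.sq_sqrt hν.le
      have h2 := Real.sq_sqrt hκ.le
      have h3 := sq_nonneg (Real.sqrt ν * t - Real.sqrt κ * v)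
      have h4 : (Real.sqrt ν * t - Real.sqrt κ * v) ^ 2
        = Real.sqrt ν ^ 2 * t ^ 2 + Real.sqrt κ ^ 2 * v ^ 2
          - 2 * (Real.sqrt ν * Real.sqrt κ * (t * v)) := by ring
      rw [h1, h2] at h4
      linarith
    have hneg := mul_le_mul_of_nonneg_left
      (neg_abs_le (QForm (y - x) (lap (T - S)) (y + x))) hlam.le
    have hlQ := mul_nonneg hlam.le hQ
    have hfin := mul_nonneg (mul_nonneg ha hb) (show 0 ≤ κ / 2 * v ^ 2 + ν / 2 * t ^ 2
      + lam * QForm (y - x) (lap (a • S + b • T)) (y - x)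
      + lam * QForm (y - x) (lap (T - S)) (y + x) by linarith)
    rw [ht2, hv2]
    linarith
end

section
/- Let α, β be positive real numbers. Then the function (w,s) ↦ s·w² + α·s² + β·w² is convex on the convex set { (w,s) ∈ ℝ² : s ≥ 0 and w² ≤ α·β }. -/
open scoped BigOperators
open Matrix

/-- The function `(w,s) ↦ s w² + α s² + β w²` is convex on
`{(w,s) : 0 ≤ s ∧ w² ≤ α β}`. -/
theorem stmt1 (α β : ℝ) (hα : 0 < α) (hβ : 0 < β) :
    ConvexOn ℝ {p : ℝ × ℝ | 0 ≤ p.2 ∧ p.1 ^ 2 ≤ α * β}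
      (fun p => p.2 * p.1 ^ 2 + α * p.2 ^ 2 + β * p.1 ^ 2) := by
  have key : ∀ w v a b : ℝ, 0 ≤ a → 0 ≤ b → a + b = 1 → w ^ 2 ≤ α * β → v ^ 2 ≤ α * β →
      (a * w + b * v) ^ 2 ≤ α * β := by
    intro w v a b ha hb hab hw hv
    have h1 : a * w ^ 2 + b * v ^ 2 - (a * w + b * v) ^ 2 = a * b * (w - v) ^ 2 := by
      obtain rfl : b = 1 - a := by linarith
      ring
    have h2 : 0 ≤ a * b * (w - v) ^ 2 := by positivity
    have h3 := mul_le_mul_of_nonneg_left hw ha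
    have h4 := mul_le_mul_of_nonneg_left hv hb
    have h5 : a * (α * β) + b * (α * β) = α * β := by rw [← add_mul, hab, one_mul]
    linarith
  refine ⟨?_, ?_⟩
  · rintro ⟨w, s⟩ ⟨hs, hw⟩ ⟨v, t⟩ ⟨ht, hv⟩ a b ha hb hab
    simp only at hs hw ht hv
    refine ⟨?_, ?_⟩
    · simp only [Prod.smul_mk, Prod.mk_add_mk, smul_eq_mul]
      positivity
    · simpa using key w v a b ha hb hab hw hv
  · rintro ⟨w, s⟩ ⟨hs, hw⟩ ⟨v, t⟩ ⟨ht, hv⟩ a b ha hb hab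
    simp only at hs hw ht hv
    simp only [Prod.smul_mk, Prod.mk_add_mk, smul_eq_mul]
    have hW := key w v ((1 + a) / 3) ((1 + b) / 3) (by positivity) (by positivity)
      (by linarith) hw hv
    have hS : 0 ≤ (1 + a) / 3 * s + (1 + b) / 3 * t := by positivity
    set W := (1 + a) / 3 * w + (1 + b) / 3 * v with hWd
    set S := (1 + a) / 3 * s + (1 + b) / 3 * t with hSd
    have hq : 0 ≤ S * (w - v) ^ 2 + 2 * W * (w - v) * (s - t) + α * (s - t) ^ 2
        + β * (w - v) ^ 2 := by
      refine nonneg_of_mul_nonneg_right (a := α) ?_ hα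
      have e : α * (S * (w - v) ^ 2 + 2 * W * (w - v) * (s - t) + α * (s - t) ^ 2
        + β * (w - v) ^ 2) = (α * (s - t) + W * (w - v)) ^ 2 + (α * β - W ^ 2) * (w - v) ^ 2
          + α * S * (w - v) ^ 2 := by ring
      have h0 : 0 ≤ α * β - W ^ 2 := by linarith
      first
        | (rw [e]; positivity)
        | (rw [mul_comm, e]; positivity)
    have h := mul_nonneg (mul_nonneg ha hb) hq
    rw [← sub_nonneg]
    convert h using 1
    rw [hWd, hSd]
    obtain rfl : b = 1 - a := by linarith
    ring
end

section
/- Let n, d, q be positive integers, let κ, ν, λ be positive reals, let A ∈ ℝ^{n×n}, let Z₀ ∈ ℝ^{n×n} be such that A + Z₀ is symmetric with all entries nonnegative, and let W₀ be a collection of n real d×q matrices. Define R(Z,W) = (ν/2)‖Z‖_F² + (κ/2)‖W‖_F² + λ·(2·Q(W, Λ(Z), W₀) + Q(W, Λ(A+Z₀), W)). Then for all Z ∈ ℝ^{n×n} and all collections W of n real d×q matrices, R(Z,W) ≥ (ν/2)‖Z‖_F² + (κ/2)‖W‖_F² − 2λ(√n + 1)·‖W‖_F·‖Z‖_F·‖W₀‖_F.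 -/
open scoped BigOperators
open Matrix

theorem aux_tr {d q : ℕ} (X Y : Matrix (Fin d) (Fin q) ℝ) :
    (Xᵀ * Y).trace = ∑ a, ∑ b, X a b * Y a b := by
  simp only [Matrix.trace, Matrix.diag, Matrix.mul_apply, Matrix.transpose_apply]
  exact Finset.sum_comm

theorem aux_cs {m k : ℕ} (X Y : Fin m → Fin k → ℝ) :
    (∑ a, ∑ b, X a b * Y a b) ^ 2 ≤ (∑ a, ∑ b, X a b ^ 2) * (∑ a, ∑ b, Y a b ^ 2) := by
  have h := Finset.sum_mul_sq_le_sq_mul_sq (Finset.univ : Finset (Fin m × Fin k))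
    (fun p => X p.1 p.2) (fun p => Y p.1 p.2)
  simpa only [Fintype.sum_prod_type] using h

theorem aux_trsq {d q : ℕ} (X Y : Matrix (Fin d) (Fin q) ℝ) :
    (Xᵀ * Y).trace ^ 2 ≤ frobSq X * frobSq Y := by
  rw [aux_tr]
  exact aux_cs X Y

theorem aux_frobSq_nonneg {n m : ℕ} (M : Matrix (Fin n) (Fin m) ℝ) : 0 ≤ frobSq M := by
  unfold frobSq
  positivity

theorem aux_coll_nonneg {n d q : ℕ} (W : Fin n → Matrix (Fin d) (Fin q) ℝ) :
    0 ≤ collFrobSq W :=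
  Finset.sum_nonneg fun _ _ => aux_frobSq_nonneg _

theorem aux_bound {n : ℕ} (Z : Matrix (Fin n) (Fin n) ℝ) (t : Fin n → Fin n → ℝ) (C : ℝ)
    (hC : 0 ≤ C) (h : ∑ i, ∑ j, t i j ^ 2 ≤ C ^ 2) :
    |∑ i, ∑ j, Z i j * t i j| ≤ frob Z * C := by
  have h0 : 0 ≤ frob Z := Real.sqrt_nonneg _
  have h1 : frob Z ^ 2 = frobSq Z := Real.sq_sqrt (aux_frobSq_nonneg Z)
  refine abs_le_of_sq_le_sq ?_ (mul_nonneg h0 hC)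
  rw [mul_pow, h1]
  exact (aux_cs (fun i j => Z i j) t).trans
    (mul_le_mul_of_nonneg_left h (aux_frobSq_nonneg Z))

theorem aux_Q {n d q : ℕ} (W V : Fin n → Matrix (Fin d) (Fin q) ℝ)
    (Z : Matrix (Fin n) (Fin n) ℝ) :
    QForm W (lap Z) V = ∑ i, ∑ j, Z i j * ((W i)ᵀ * V i).trace
      - ∑ i, ∑ j, Z i j * ((W i)ᵀ * V j).trace := by
  unfold QForm lap degMatrix
  rw [← Finset.sum_sub_distrib]
  refine Finset.sum_congr rfl fun i _ => ?_
  simp only [Matrix.sub_apply, sub_mul, Finset.sum_sub_distrib, Matrix.diagonal_apply, ite_mul,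
    zero_mul, Finset.sum_ite_eq, Finset.mem_univ, if_true, Finset.sum_mul]

theorem aux_Q_bound {n d q : ℕ} (W V : Fin n → Matrix (Fin d) (Fin q) ℝ)
    (Z : Matrix (Fin n) (Fin n) ℝ) :
    |QForm W (lap Z) V| ≤ (Real.sqrt n + 1) * collFrob W * frob Z * collFrob V := by
  have hW : collFrob W ^ 2 = collFrobSq W := Real.sq_sqrt (aux_coll_nonneg W)
  have hV : collFrob V ^ 2 = collFrobSq V := Real.sq_sqrt (aux_coll_nonneg V)
  have hW0 : 0 ≤ collFrob W := Real.sqrt_nonneg _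
  have hV0 : 0 ≤ collFrob V := Real.sqrt_nonneg _
  have h1 := aux_bound Z (fun i _ => ((W i)ᵀ * V i).trace)
    (Real.sqrt n * (collFrob W * collFrob V)) (by positivity) (by
      rw [mul_pow, mul_pow, hW, hV, Real.sq_sqrt (Nat.cast_nonneg n)]
      simp only [Finset.sum_const, Finset.card_univ, Fintype.card_fin, nsmul_eq_mul]
      rw [← Finset.mul_sum]
      refine mul_le_mul_of_nonneg_left ?_ (Nat.cast_nonneg n)
      rw [collFrobSq, Finset.sum_mul]
      refine Finset.sum_le_sum fun i _ => (aux_trsq _ _).trans ?_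
      refine mul_le_mul_of_nonneg_left ?_ (aux_frobSq_nonneg _)
      exact Finset.single_le_sum (f := fun i => frobSq (V i))
        (fun _ _ => aux_frobSq_nonneg _) (Finset.mem_univ i))
  have h2 := aux_bound Z (fun i j => ((W i)ᵀ * V j).trace)
    (collFrob W * collFrob V) (by positivity) (by
      rw [mul_pow, hW, hV, collFrobSq, collFrobSq, Finset.sum_mul_sum]
      exact Finset.sum_le_sum fun i _ => Finset.sum_le_sum fun j _ => aux_trsq _ _)
  rw [aux_Q]
  refine (abs_sub _ _).trans ((add_le_add h1 h2).trans (le_of_eq ?_))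
  ring

theorem aux_psd {n d q : ℕ} (W : Fin n → Matrix (Fin d) (Fin q) ℝ)
    (S : Matrix (Fin n) (Fin n) ℝ) (hs : S.IsSymm) (hp : ∀ i j, 0 ≤ S i j) :
    0 ≤ QForm W (lap S) W := by
  have e : ∑ i, ∑ j, S i j * ((W i)ᵀ * W i).trace = ∑ i, ∑ j, S i j * ((W j)ᵀ * W j).trace := by
    rw [Finset.sum_comm]
    refine Finset.sum_congr rfl fun i _ => Finset.sum_congr rfl fun j _ => ?_
    rw [hs.apply]
  have key : 2 * QForm W (lap S) W = ∑ i, ∑ j, S i j * (((W i)ᵀ * W i).trace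
      + ((W j)ᵀ * W j).trace - 2 * ((W i)ᵀ * W j).trace) := by
    have : 2 * QForm W (lap S) W = ∑ i, ∑ j, S i j * ((W i)ᵀ * W i).trace
      + ∑ i, ∑ j, S i j * ((W j)ᵀ * W j).trace
      - 2 * ∑ i, ∑ j, S i j * ((W i)ᵀ * W j).trace := by
      rw [aux_Q, ← e]; ring
    rw [this]
    simp only [Finset.mul_sum, ← Finset.sum_add_distrib, ← Finset.sum_sub_distrib]
    refine Finset.sum_congr rfl fun i _ => Finset.sum_congr rfl fun j _ => ?_
    ring
  have : 0 ≤ 2 * QForm W (lap S) W := by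
    rw [key]
    refine Finset.sum_nonneg fun i _ => Finset.sum_nonneg fun j _ => mul_nonneg (hp i j) ?_
    simp only [aux_tr, Finset.mul_sum, ← Finset.sum_add_distrib, ← Finset.sum_sub_distrib]
    refine Finset.sum_nonneg fun a _ => Finset.sum_nonneg fun b _ => ?_
    nlinarith [sq_nonneg (W i a b - W j a b)]
  linarith

/-- Lower bound on the quadratic part `R(Z,W)` of `Ψ(A+Z₀+Z, W₀+W)`:
`R(Z,W) ≥ (ν/2)‖Z‖_F² + (κ/2)‖W‖_F² − 2λ(√n+1)‖W‖_F ‖Z‖_F ‖W₀‖_F`. -/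
theorem stmt9 (n d q : ℕ) (hn : 0 < n) (hd : 0 < d) (hq : 0 < q)
    (κ ν lam : ℝ) (hκ : 0 < κ) (hν : 0 < ν) (hlam : 0 < lam)
    (A Z₀ : Matrix (Fin n) (Fin n) ℝ) (hsymm : (A + Z₀).IsSymm)
    (hpos : ∀ i j, 0 ≤ (A + Z₀) i j)
    (W₀ : Fin n → Matrix (Fin d) (Fin q) ℝ) :
    ∀ (Z : Matrix (Fin n) (Fin n) ℝ) (W : Fin n → Matrix (Fin d) (Fin q) ℝ),
      ν / 2 * frobSq Z + κ / 2 * collFrobSq W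
          + lam * (2 * QForm W (lap Z) W₀ + QForm W (lap (A + Z₀)) W)
        ≥ ν / 2 * frobSq Z + κ / 2 * collFrobSq W
          - 2 * lam * (Real.sqrt n + 1) * collFrob W * frob Z * collFrob W₀ := by
  intro Z W
  have h1 := neg_le_of_abs_le (aux_Q_bound W W₀ Z)
  have h2 := aux_psd W (A + Z₀) hsymm hpos
  have h3 := mul_le_mul_of_nonneg_left h1 hlam.le
  have h4 := mul_nonneg hlam.le h2
  linarith
end
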